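/- arXiv:2604.02462 — 2 statements merged into one kernel-verified Lean document; each statement's English description precedes it below -/
import Mathlib

section
/- Let Ω be a bounded domain in ℂ and let a, b be distinct points of Ω. Then for every M > 0 and every ε > 0 there exist a positive integer N and real coefficients c_{nm} (0 ≤ n, m ≤ N) such that for every harmonic function u : Ω → ℝ with |u(z)| < M for all z ∈ Ω, one has |u(b) − Σ_{0 ≤ n,m ≤ N} c_{nm} (∂^{n+m} u / ∂x^n ∂y^m)(a)| < ε. The integer N and the coefficients c_{nm} depend on Ω, a, b, ε, M but not on u. -/
open MeasureTheory Finset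

/-- Directional (partial) derivative of a real-valued function on `ℂ ≅ ℝ²`
in the direction `v`; `pderivAlong 1` is `∂/∂x` and `pderivAlong I` is `∂/∂y`. -/
noncomputable def pderivAlong (v : ℂ) (u : ℂ → ℝ) : ℂ → ℝ :=
  fun z => fderiv ℝ u z v

/-- `u` is harmonic on `Ω`: twice continuously differentiable (over `ℝ`) on `Ω`
and satisfying `u_xx + u_yy = 0` there. -/
def HarmonicOnSet (u : ℂ → ℝ) (Ω : Set ℂ) : Prop :=
  ContDiffOn ℝ 2 u Ω ∧
    ∀ z ∈ Ω, pderivAlong 1 (pderivAlong 1 u) z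
      + pderivAlong Complex.I (pderivAlong Complex.I u) z = 0


namespace RTS

open Complex

/-- A functional `φ` is uniformly approximable on `H` by elements of `V`. -/
def Apx (H : Set (ℂ → ℝ)) (V : Submodule ℝ ((ℂ → ℝ) → ℝ)) (φ : (ℂ → ℝ) → ℝ) : Prop :=
  ∀ ε > 0, ∃ ψ ∈ V, ∀ u ∈ H, |φ u - ψ u| < ε

variable {H : Set (ℂ → ℝ)} {V : Submodule ℝ ((ℂ → ℝ) → ℝ)}

lemma Apx.of_mem {φ ψ : (ℂ → ℝ) → ℝ} (hψ : ψ ∈ V) (h : ∀ u ∈ H, φ u = ψ u) : Apx H V φ := by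
  intro ε hε
  exact ⟨ψ, hψ, fun u hu => by simpa [h u hu] using hε⟩

lemma Apx.closed {φ : (ℂ → ℝ) → ℝ}
    (h : ∀ ε > 0, ∃ χ, Apx H V χ ∧ ∀ u ∈ H, |φ u - χ u| < ε) : Apx H V φ := by
  intro ε hε
  obtain ⟨χ, hχ, h1⟩ := h (ε / 2) (by positivity)
  obtain ⟨ψ, hψ, h2⟩ := hχ (ε / 2) (by positivity)
  refine ⟨ψ, hψ, fun u hu => ?_⟩
  have := abs_sub_le (φ u) (χ u) (ψ u)
  linarith [h1 u hu, h2 u hu]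

lemma Apx.add {φ χ : (ℂ → ℝ) → ℝ} (h : Apx H V φ) (h' : Apx H V χ) :
    Apx H V (fun u => φ u + χ u) := by
  intro ε hε
  obtain ⟨ψ, hψ, h1⟩ := h (ε / 2) (by positivity)
  obtain ⟨ψ', hψ', h2⟩ := h' (ε / 2) (by positivity)
  refine ⟨ψ + ψ', V.add_mem hψ hψ', fun u hu => ?_⟩
  have h3 : φ u + χ u - (ψ + ψ') u = (φ u - ψ u) + (χ u - ψ' u) := by
    simp only [Pi.add_apply]; ring
  rw [h3]
  have := abs_add_le (φ u - ψ u) (χ u - ψ' u)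
  linarith [h1 u hu, h2 u hu]

lemma Apx.smul {φ : (ℂ → ℝ) → ℝ} (c : ℝ) (h : Apx H V φ) :
    Apx H V (fun u => c * φ u) := by
  intro ε hε
  obtain ⟨ψ, hψ, h1⟩ := h (ε / (|c| + 1)) (by positivity)
  refine ⟨c • ψ, V.smul_mem c hψ, fun u hu => ?_⟩
  have h3 : c * φ u - (c • ψ) u = c * (φ u - ψ u) := by
    simp only [Pi.smul_apply, smul_eq_mul]; ring
  rw [h3, abs_mul]
  have h4 := h1 u hu
  rw [lt_div_iff₀ (by positivity)] at h4
  nlinarith [abs_nonneg (φ u - ψ u), abs_nonneg c]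

lemma Apx.zero : Apx H V (fun _ => 0) := Apx.of_mem (V.zero_mem) (fun _ _ => rfl)

lemma Apx.sum {φ : ℕ → (ℂ → ℝ) → ℝ} (N : ℕ) (h : ∀ n < N, Apx H V (φ n)) :
    Apx H V (fun u => ∑ n ∈ range N, φ n u) := by
  induction N with
  | zero => simpa using Apx.zero
  | succ k ih =>
    simp only [Finset.sum_range_succ]
    exact (ih fun n hn => h n (by omega)).add (h k (by omega))

/-- Uniform local power series expansion at `z`. -/
def LocSer (H : Set (ℂ → ℝ)) (z : ℂ) (r C : ℝ) (p : (ℂ → ℝ) → ℕ → ℂ) : Prop :=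
  ∀ u ∈ H, (∀ n, ‖p u n‖ ≤ C / r ^ n) ∧
    ∀ w, ‖w‖ < r → HasSum (fun n => (p u n * w ^ n).re) (u (z + w))

lemma LocSer.tail {z : ℂ} {r C : ℝ} {p : (ℂ → ℝ) → ℕ → ℂ} (hr : 0 < r) (hC : 0 ≤ C)
    (hp : LocSer H z r C p) {u : ℂ → ℝ} (hu : u ∈ H) {w : ℂ} (hw : ‖w‖ ≤ r / 2) (N : ℕ) :
    |u (z + w) - ∑ n ∈ range N, (p u n * w ^ n).re| ≤ 2 * C * (‖w‖ / r) ^ N := by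
  obtain ⟨h1, h2⟩ := hp u hu
  have hq : ‖w‖ / r ≤ 1 / 2 := by rw [div_le_iff₀ hr]; linarith
  have hq0 : 0 ≤ ‖w‖ / r := by positivity
  have hb : ∀ n, ‖(p u n * w ^ n).re‖ ≤ C * (‖w‖ / r) ^ n := by
    intro n
    rw [Real.norm_eq_abs]
    refine (abs_re_le_norm _).trans ?_
    rw [norm_mul, norm_pow, div_pow]
    calc ‖p u n‖ * ‖w‖ ^ n ≤ C / r ^ n * ‖w‖ ^ n := by gcongr; exact h1 n
      _ = _ := by ring
  have h3 := norm_sub_le_of_geometric_bound_of_hasSum (by linarith) hb (h2 w (by linarith)) N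
  rw [norm_sub_rev, Real.norm_eq_abs] at h3
  refine h3.trans ?_
  rw [div_le_iff₀ (by linarith)]
  have : 0 ≤ C * (‖w‖ / r) ^ N := by positivity
  nlinarith

lemma LocSer.forward {z : ℂ} {r C : ℝ} {p : (ℂ → ℝ) → ℕ → ℂ} (hr : 0 < r) (hC : 0 ≤ C)
    (hp : LocSer H z r C p) (hQ : ∀ n w, Apx H V (fun u => (p u n * w ^ n).re))
    {w : ℂ} (hw : ‖w‖ ≤ r / 2) : Apx H V (fun u => u (z + w)) := by
  apply Apx.closed
  intro ε hε
  have hq : ‖w‖ / r ≤ 1 / 2 := by rw [div_le_iff₀ hr]; linarith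
  have hq0 : 0 ≤ ‖w‖ / r := by positivity
  obtain ⟨N, hN⟩ := exists_pow_lt_of_lt_one (show 0 < ε / (2 * C + 1) by positivity)
    (show ‖w‖ / r < 1 by linarith)
  refine ⟨_, Apx.sum N (fun n _ => hQ n w), fun u hu => ?_⟩
  refine (hp.tail hr hC hu hw N).trans_lt ?_
  rw [lt_div_iff₀ (by positivity)] at hN
  have : 0 ≤ (‖w‖ / r) ^ N := by positivity
  rcases this.eq_or_lt with h | h
  · rw [← h]; simpa using hε
  · nlinarith

lemma LocSer.backward {z : ℂ} {r C : ℝ} {p : (ℂ → ℝ) → ℕ → ℂ} (hr : 0 < r) (hC : 0 ≤ C)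
    (hp : LocSer H z r C p) {δ : ℝ} (hδ : 0 < δ)
    (hv : ∀ w, ‖w‖ < δ → Apx H V (fun u => u (z + w))) (n : ℕ) :
    ∀ w, Apx H V (fun u => (p u n * w ^ n).re) := by
  induction n using Nat.strong_induction_on with
  | _ n ih =>
  intro w
  apply Apx.closed
  intro ε hε
  set K := 2 * C * (‖w‖ / r) ^ (n + 1) with hK
  have hK0 : 0 ≤ K := by positivity
  obtain ⟨t, ht0, ht1, ht2, ht3⟩ : ∃ t : ℝ, 0 < t ∧ t * ‖w‖ < δ ∧ t * ‖w‖ ≤ r / 2 ∧ K * t < ε := by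
    have hd : 0 < min (min δ (r / 2)) ε := by positivity
    refine ⟨min (min δ (r / 2)) ε / (‖w‖ + K + 1), by positivity, ?_, ?_, ?_⟩
    · have : min (min δ (r / 2)) ε / (‖w‖ + K + 1) * ‖w‖ < min (min δ (r / 2)) ε := by
        rw [div_mul_eq_mul_div, div_lt_iff₀ (by positivity)]
        nlinarith [norm_nonneg w]
      exact this.trans_le ((min_le_left _ _).trans (min_le_left _ _))
    · have : min (min δ (r / 2)) ε / (‖w‖ + K + 1) * ‖w‖ < min (min δ (r / 2)) ε := by
        rw [div_mul_eq_mul_div, div_lt_iff₀ (by positivity)]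
        nlinarith [norm_nonneg w]
      exact (this.trans_le ((min_le_left _ _).trans (min_le_right _ _))).le
    · have : K * (min (min δ (r / 2)) ε / (‖w‖ + K + 1)) < min (min δ (r / 2)) ε := by
        rw [mul_div_assoc', div_lt_iff₀ (by positivity)]
        nlinarith [norm_nonneg w]
      exact this.trans_le (min_le_right _ _)
  have hnorm : ‖(t : ℂ) * w‖ = t * ‖w‖ := by
    rw [norm_mul, norm_real, Real.norm_eq_abs, abs_of_pos ht0]
  refine ⟨_, ((hv (t * w) (by rwa [hnorm])).add
    ((Apx.sum n (fun k hk => ih k hk (t * w))).smul (-1))).smul (t ^ n)⁻¹, fun u hu => ?_⟩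
  have h1 := hp.tail hr hC hu (w := t * w) (by rwa [hnorm]) (n + 1)
  rw [Finset.sum_range_succ, hnorm] at h1
  have h2 : (p u n * ((t : ℂ) * w) ^ n).re = t ^ n * (p u n * w ^ n).re := by
    rw [mul_pow, ← ofReal_pow, ← re_ofReal_mul]; congr 1; ring
  rw [h2] at h1
  have htn : 0 < t ^ n := by positivity
  have h3 : (p u n * w ^ n).re - (t ^ n)⁻¹ * (u (z + t * w) + -1 * ∑ k ∈ range n,
      (p u k * ((t : ℂ) * w) ^ k).re) = -((t ^ n)⁻¹ * (u (z + t * w) - (∑ k ∈ range n,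
      (p u k * ((t : ℂ) * w) ^ k).re + t ^ n * (p u n * w ^ n).re))) := by
    field_simp; ring
  rw [h3, abs_neg, abs_mul, abs_of_pos (inv_pos.2 htn)]
  refine lt_of_le_of_lt ?_ ht3
  rw [inv_mul_le_iff₀ htn]
  refine h1.trans (le_of_eq ?_)
  rw [hK]; ring

lemma harmonicOnNhd {u : ℂ → ℝ} {Ω : Set ℂ} (hΩ : IsOpen Ω) (h : HarmonicOnSet u Ω) :
    InnerProductSpace.HarmonicOnNhd u Ω := by
  have key : ∀ z ∈ Ω, ContDiffAt ℝ 2 u z := fun z hz => h.1.contDiffAt (hΩ.mem_nhds hz)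
  intro z hz
  refine ⟨key z hz, ?_⟩
  filter_upwards [hΩ.mem_nhds hz] with y hy
  have hd : DifferentiableAt ℝ (fderiv ℝ u) y :=
    ((key y hy).fderiv_right (m := 1) (by norm_num)).differentiableAt (by norm_num)
  have h2 := h.2 y hy
  have h3 : ∀ v : ℂ, pderivAlong v (pderivAlong v u) y = fderiv ℝ (fderiv ℝ u) y v v := by
    intro v
    unfold pderivAlong
    rw [fderiv_clm_apply hd (by fun_prop)]
    simp
  rw [h3, h3] at h2
  simpa [InnerProductSpace.laplacian_eq_iteratedFDeriv_complexPlane,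
    iteratedFDeriv_two_apply] using h2

lemma pderiv_re {u : ℂ → ℝ} {f : ℂ → ℂ} {B : Set ℂ} (hB : IsOpen B) (hf : DifferentiableOn ℂ f B)
    (h : ∀ x ∈ B, u x = (f x).re) (v : ℂ) :
    ∀ x ∈ B, pderivAlong v u x = (v * deriv f x).re := by
  intro x hx
  have h1 : HasDerivAt f (deriv f x) x := (hf.differentiableAt (hB.mem_nhds hx)).hasDerivAt
  have h2 := (reCLM.hasFDerivAt).comp x (h1.hasFDerivAt.restrictScalars ℝ)
  have h3 : u =ᶠ[nhds x] (reCLM ∘ f) := by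
    filter_upwards [hB.mem_nhds hx] with y hy
    simpa using h y hy
  unfold pderivAlong
  rw [h3.fderiv_eq, h2.fderiv]
  simp

lemma pderiv_iter {B : Set ℂ} (hB : IsOpen B) (n : ℕ) : ∀ {u : ℂ → ℝ} {f : ℂ → ℂ},
    DifferentiableOn ℂ f B → (∀ x ∈ B, u x = (f x).re) →
    ∀ x ∈ B, (pderivAlong 1)^[n] u x = (iteratedDeriv n f x).re := by
  induction n with
  | zero => intro u f hf h; simpa using h
  | succ k ih =>
    intro u f hf h x hx
    rw [Function.iterate_succ_apply, iteratedDeriv_succ']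
    exact ih (hf.deriv hB) (fun y hy => by simpa using pderiv_re hB hf h 1 y hy) x hx

/-- Existence of the holomorphic completion with uniform bounds. -/
lemma exists_f {Ω : Set ℂ} (hΩ : IsOpen Ω) {M : ℝ} (hM : 0 < M) {z : ℂ} {R : ℝ} (hR : 0 < R)
    (hB : Metric.ball z R ⊆ Ω) {u : ℂ → ℝ} (hu : HarmonicOnSet u Ω) (hb : ∀ z ∈ Ω, |u z| < M) :
    ∃ f : ℂ → ℂ, DifferentiableOn ℂ f (Metric.ball z R) ∧
      (∀ x ∈ Metric.ball z R, u x = (f x).re) ∧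
      ∀ x, dist x z ≤ R / 2 → ‖f x‖ ≤ 5 * M := by
  obtain ⟨F, hF, hFu⟩ := InnerProductSpace.HarmonicOnNhd.exists_analyticOnNhd_ball_re_eq
    ((harmonicOnNhd hΩ hu).mono hB)
  have hd : DifferentiableOn ℂ (fun x => F x - (F z).im * I) (Metric.ball z R) :=
    hF.differentiableOn.sub_const _
  have hre : ∀ x ∈ Metric.ball z R, u x = (F x - (F z).im * I).re := by
    intro x hx
    simpa using (hFu hx).symm
  have hz : z ∈ Metric.ball z R := Metric.mem_ball_self hR
  refine ⟨_, hd, hre, ?_⟩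
  intro x hx
  have hmaps : Set.MapsTo (fun w => z + w) (Metric.ball (0 : ℂ) R) (Metric.ball z R) := by
    intro w hw
    simpa using hw
  have hw : ‖x - z‖ ≤ R / 2 := by rwa [dist_eq_norm] at hx
  have hBC := borelCaratheodory (f := fun w => F (z + w) - (F z).im * I) (z := x - z) hM
    (hd.comp (by fun_prop) hmaps)
    (fun w hw => by
      have h1 := hre _ (hmaps hw)
      have h2 := hb _ (hB (hmaps hw))
      simp only [Set.mem_ofPred_eq]
      rw [← h1]
      exact (lt_of_abs_lt h2).le) hR
    (by rw [mem_ball_zero_iff]; linarith)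
  have h0 : F z - (F z).im * I = (u z : ℂ) := by
    rw [hre z hz]
    apply Complex.ext <;> simp
  simp only [add_zero, add_sub_cancel, h0, norm_real, Real.norm_eq_abs] at hBC
  refine hBC.trans ?_
  have hs : 0 < R - ‖x - z‖ := by linarith
  rw [← add_div, div_le_iff₀ hs]
  have := hb z (hB hz)
  nlinarith [norm_nonneg (x - z), abs_nonneg (u z)]

lemma exists_locSer {Ω : Set ℂ} (hΩ : IsOpen Ω) {M : ℝ} (hM : 0 < M) {z : ℂ} {R : ℝ} (hR : 0 < R)
    (hB : Metric.ball z R ⊆ Ω) :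
    ∃ p, LocSer {u | HarmonicOnSet u Ω ∧ ∀ z ∈ Ω, |u z| < M} z (R / 2) (5 * M) p ∧
      ∀ u ∈ {u | HarmonicOnSet u Ω ∧ ∀ z ∈ Ω, |u z| < M},
        (∀ n : ℕ, (p u n).re = (n.factorial : ℝ)⁻¹ * (pderivAlong 1)^[n] u z) ∧
        ∀ n : ℕ, (p u (n + 1)).im = -((n + 1).factorial : ℝ)⁻¹ *
          (pderivAlong 1)^[n] (pderivAlong I u) z := by
  have hz : z ∈ Metric.ball z R := Metric.mem_ball_self hR
  have h := fun u : {u | HarmonicOnSet u Ω ∧ ∀ z ∈ Ω, |u z| < M} =>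
    exists_f hΩ hM hR hB u.2.1 u.2.2
  choose f hf using h
  classical
  refine ⟨fun u n => if hu : u ∈ {u | HarmonicOnSet u Ω ∧ ∀ z ∈ Ω, |u z| < M} then
    (n.factorial : ℂ)⁻¹ * iteratedDeriv n (f ⟨u, hu⟩) z else 0, ?_, ?_⟩
  · intro u hu
    obtain ⟨h1, h2, h3⟩ := hf ⟨u, hu⟩
    simp only [dif_pos hu]
    refine ⟨fun n => ?_, fun w hw => ?_⟩
    · have hsub : Metric.closedBall z (R / 2) ⊆ Metric.ball z R :=
        Metric.closedBall_subset_ball (by linarith)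
      have := norm_iteratedDeriv_le_of_forall_mem_sphere_norm_le n (half_pos hR)
        ((h1.mono hsub).diffContOnCl_ball subset_rfl) (C := 5 * M)
        (fun x hx => h3 x (Metric.mem_sphere.1 hx).le)
      rw [norm_mul, norm_inv, norm_natCast, inv_mul_le_iff₀ (by positivity)]
      rwa [mul_div_assoc] at this
    · have hm : z + w ∈ Metric.ball z R := by
        rw [Metric.mem_ball, dist_eq_norm, add_sub_cancel_left]; linarith
      have := hasSum_taylorSeries_on_ball h1 hm
      have h4 := reCLM.hasSum this
      rw [show u (z + w) = _ from h2 _ hm]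
      convert h4 using 1
      · funext n
        simp only [reCLM_apply, smul_eq_mul, add_sub_cancel_left]
        congr 1; ring
      · rfl
  · intro u hu
    obtain ⟨h1, h2, h3⟩ := hf ⟨u, hu⟩
    simp only [dif_pos hu]
    have hc : ∀ n : ℕ, ((n.factorial : ℂ)⁻¹) = (((n.factorial : ℝ)⁻¹ : ℝ) : ℂ) := by
      intro n; push_cast; rfl
    refine ⟨fun n => ?_, fun n => ?_⟩
    · rw [hc, re_ofReal_mul, pderiv_iter Metric.isOpen_ball n h1 h2 z hz]
    · have h4 := pderiv_iter Metric.isOpen_ball n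
        (u := pderivAlong I u) (f := fun x => I * deriv (f ⟨u, hu⟩) x)
        ((h1.deriv Metric.isOpen_ball).const_mul I)
        (pderiv_re Metric.isOpen_ball h1 h2 I) z hz
      have han : ContDiffAt ℂ n (deriv (f ⟨u, hu⟩)) z :=
        ((h1.deriv Metric.isOpen_ball).analyticAt (Metric.isOpen_ball.mem_nhds hz)).contDiffAt
      rw [hc, im_ofReal_mul, h4, iteratedDeriv_const_mul_field, ← iteratedDeriv_succ']
      simp

end RTS

open RTS Complex in
/-- Remote temperature sensing: on a bounded domain `Ω ⊆ ℂ` with distinct points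
`a, b ∈ Ω`, for any `M > 0` and `ε > 0` there are `N` and real coefficients
`c n m` (`0 ≤ n, m ≤ N`), independent of `u`, such that every harmonic `u` on `Ω`
bounded by `M` satisfies
`|u(b) − Σ_{n,m ≤ N} c_{nm} ∂^{n+m}u/∂x^n∂y^m (a)| < ε`. -/
theorem remote_temperature_sensing
    (Ω : Set ℂ) (hΩopen : IsOpen Ω) (hΩconn : IsConnected Ω)
    (hΩbdd : Bornology.IsBounded Ω)
    (a b : ℂ) (ha : a ∈ Ω) (hb : b ∈ Ω) (hab : a ≠ b)
    (M ε : ℝ) (hM : 0 < M) (hε : 0 < ε) :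
    ∃ N : ℕ, 0 < N ∧ ∃ c : ℕ → ℕ → ℝ,
      ∀ u : ℂ → ℝ, HarmonicOnSet u Ω → (∀ z ∈ Ω, |u z| < M) →
        |u b - ∑ n ∈ Finset.range (N + 1), ∑ m ∈ Finset.range (N + 1),
            c n m * (pderivAlong 1)^[n] ((pderivAlong Complex.I)^[m] u) a| < ε := by
  classical
  set H : Set (ℂ → ℝ) := {u | HarmonicOnSet u Ω ∧ ∀ z ∈ Ω, |u z| < M} with hH
  let D : ℕ × ℕ → (ℂ → ℝ) → ℝ := fun q u =>
    (pderivAlong 1)^[q.1] ((pderivAlong Complex.I)^[q.2] u) a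
  let V : Submodule ℝ ((ℂ → ℝ) → ℝ) := Submodule.span ℝ (Set.range D)
  have hD : ∀ q, Apx H V (D q) := fun q =>
    Apx.of_mem (Submodule.subset_span ⟨q, rfl⟩) (fun _ _ => rfl)
  let S : Set ℂ := {z | ∃ δ > 0, ∀ w : ℂ, ‖w‖ < δ → Apx H V (fun u => u (z + w))}
  have hSopen : IsOpen S := by
    rw [Metric.isOpen_iff]
    rintro z ⟨δ, hδ, h⟩
    refine ⟨δ / 2, by positivity, fun y hy => ⟨δ / 2, by positivity, fun w hw => ?_⟩⟩
    have h1 := h (y - z + w) (by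
      rw [Metric.mem_ball, dist_eq_norm] at hy
      exact (norm_add_le _ _).trans_lt (by linarith))
    have h2 : z + (y - z + w) = y + w := by ring
    rwa [h2] at h1
  have hM5 : 0 ≤ 5 * M := by positivity
  have haS : a ∈ S := by
    obtain ⟨R, hR, hB⟩ := Metric.isOpen_iff.1 hΩopen a ha
    obtain ⟨p, hp, hpu⟩ := exists_locSer hΩopen hM hR hB
    refine ⟨R / 4, by positivity, fun w hw => ?_⟩
    refine hp.forward (half_pos hR) hM5 (fun n w => ?_) (by linarith)
    cases n with
    | zero =>
      have h1 : Apx H V (fun u => ((Nat.factorial 0 : ℝ))⁻¹ * D (0, 0) u) := (hD (0, 0)).smul _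
      intro ε hε
      obtain ⟨ψ, hψ, h⟩ := h1 ε hε
      refine ⟨ψ, hψ, fun u hu => ?_⟩
      have := h u hu
      beta_reduce
      rw [pow_zero, mul_one, (hpu u hu).1 0]
      exact this
    | succ n =>
      have h1 := ((hD (n + 1, 0)).smul (((n + 1).factorial : ℝ)⁻¹ * (w ^ (n + 1)).re)).add
        ((hD (n, 1)).smul (((n + 1).factorial : ℝ)⁻¹ * (w ^ (n + 1)).im))
      intro ε hε
      obtain ⟨ψ, hψ, h⟩ := h1 ε hε
      refine ⟨ψ, hψ, fun u hu => ?_⟩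
      have := h u hu
      beta_reduce
      rw [mul_re, (hpu u hu).1 (n + 1), (hpu u hu).2 n]
      convert this using 2
      simp only [D, Function.iterate_zero, Function.iterate_one, id]
      ring
  have hsub : Ω ⊆ S := by
    apply hΩconn.isPreconnected.subset_of_closure_inter_subset hSopen ⟨a, ha, haS⟩
    rintro z ⟨hzS, hz⟩
    obtain ⟨R, hR, hB⟩ := Metric.isOpen_iff.1 hΩopen z hz
    obtain ⟨y, ⟨δ, hδ, hy⟩, hyz⟩ := Metric.mem_closure_iff.1 hzS (R / 16) (by positivity)
    have hB' : Metric.ball y (R / 2) ⊆ Ω := by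
      refine (Metric.ball_subset_ball' ?_).trans hB
      rw [dist_comm]; linarith
    obtain ⟨p, hp, -⟩ := exists_locSer hΩopen hM (half_pos hR) hB'
    have hr : 0 < R / 2 / 2 := by positivity
    have hQ := hp.backward hr hM5 (V := V) hδ hy
    refine ⟨R / 16, by positivity, fun w hw => ?_⟩
    have h1 := hp.forward hr hM5 hQ (w := z - y + w) (by
      rw [dist_eq_norm] at hyz
      exact (norm_add_le _ _).trans (by linarith))
    have h2 : y + (z - y + w) = z + w := by ring
    rwa [h2] at h1
  obtain ⟨δ, hδ, hbS⟩ := hsub hb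
  obtain ⟨ψ, hψ, hlast⟩ := hbS 0 (by simpa using hδ) ε hε
  obtain ⟨c, rfl⟩ := Finsupp.mem_span_range_iff_exists_finsupp.1 hψ
  obtain ⟨N, hN⟩ : ∃ N : ℕ, ∀ q ∈ c.support, q.1 ≤ N ∧ q.2 ≤ N :=
    ⟨c.support.sup (fun q => q.1 + q.2), fun q hq => by
      have := Finset.le_sup (f := fun q : ℕ × ℕ => q.1 + q.2) hq
      omega⟩
  refine ⟨N + 1, by omega, fun n m => c (n, m), fun u hu hub => ?_⟩
  have h1 := hlast u ⟨hu, hub⟩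
  rw [Finsupp.sum_of_support_subset c (s := range (N + 1 + 1) ×ˢ range (N + 1 + 1))
    (fun q hq => by
      have := hN q hq
      simp only [Finset.mem_product, Finset.mem_range]
      omega) _ (by simp), Finset.sum_apply, Finset.sum_product] at h1
  simpa [D] using h1
end

section
/- Let Ω be a bounded domain in ℂ and let a, b ∈ Ω. Then for every ε > 0 there exist a positive integer N and complex constants c_0, …, c_N such that for every holomorphic function h on Ω that is square-integrable with respect to Lebesgue area measure on Ω, one has |h(b) − Σ_{m=0}^N \bar{c}_m h^{(m)}(a)| ≤ ε · (∫_Ω |h|² dA)^{1/2}. (An 'approximate null quadrature identity'.) -/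
open MeasureTheory Finset

lemma anq_circle (g : ℂ → ℂ) (z : ℂ) (s : ℝ) (hs : 0 < s)
    (hg : DiffContOnCl ℂ g (Metric.ball z s)) :
    ENNReal.ofReal (2 * Real.pi) * ‖g z‖ₑ ≤
      ∫⁻ θ in Set.Ioo (-Real.pi) Real.pi, ‖g (circleMap z s θ)‖ₑ := by
  have h1 : Real.circleAverage g z s = g z :=
    DiffContOnCl.circleAverage (by rwa [abs_of_pos hs])
  have h2 : ∫ θ in (0:ℝ)..2 * Real.pi, g (circleMap z s θ) = (2 * Real.pi) • g z := by
    rw [← h1, Real.circleAverage_def, smul_smul, mul_inv_cancel₀ (by positivity), one_smul]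
  have h3 : ∫ θ in (-Real.pi)..Real.pi, g (circleMap z s θ) = (2 * Real.pi) • g z := by
    rw [← h2]
    have hp : Function.Periodic (fun θ => g (circleMap z s θ)) (2 * Real.pi) :=
      (periodic_circleMap z s).comp g
    have := hp.intervalIntegral_add_eq (-Real.pi) 0
    rw [zero_add] at this
    rw [← this]
    congr 1
    ring
  rw [intervalIntegral.integral_of_le (by linarith [Real.pi_pos]),
    integral_Ioc_eq_integral_Ioo] at h3
  have h4 := enorm_integral_le_lintegral_enorm (μ := volume.restrict (Set.Ioo (-Real.pi) Real.pi))
    (fun θ => g (circleMap z s θ))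
  rw [h3, enorm_smul, Real.enorm_of_nonneg (by positivity)] at h4
  exact h4

lemma anq_area (g : ℂ → ℂ) (z : ℂ) (r : ℝ) (hr : 0 < r)
    (hg : DifferentiableOn ℂ g (Metric.ball z r)) :
    ENNReal.ofReal (r / 2) * (ENNReal.ofReal (r / 2) * (ENNReal.ofReal (2 * Real.pi) * ‖g z‖ₑ)) ≤
      ∫⁻ w in Metric.ball z r, ‖g w‖ₑ := by
  classical
  set F : ℂ → ENNReal := (Metric.ball z r).indicator (fun w => ‖g w‖ₑ) with hF
  have hFm : Measurable F := by
    have : Measurable ((Metric.ball z r).piecewise g 0) :=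
      hg.continuousOn.measurable_piecewise continuousOn_const Metric.isOpen_ball.measurableSet
    have h2 := this.enorm
    convert h2 using 1
    funext w
    by_cases hw : w ∈ Metric.ball z r
    · simp [F, hw]
    · simp only [F, Set.indicator_of_notMem hw, Set.piecewise_eq_of_notMem _ _ _ hw]
      simp
  rw [← lintegral_indicator Metric.isOpen_ball.measurableSet, ← hF,
    ← lintegral_add_left_eq_self F z, ← Complex.lintegral_comp_polarCoord_symm]
  have ht : polarCoord.target = Set.Ioi (0:ℝ) ×ˢ Set.Ioo (-Real.pi) Real.pi := rfl
  have hcm : ∀ p : ℝ × ℝ, z + Complex.polarCoord.symm p = circleMap z p.1 p.2 := by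
    intro p
    rw [Complex.polarCoord_symm_apply, circleMap, Complex.exp_mul_I]
    simp
  simp only [hcm, ht, smul_eq_mul]
  have hcont : Measurable (fun p : ℝ × ℝ => circleMap z p.1 p.2) := by
    unfold circleMap
    fun_prop
  rw [Measure.volume_eq_prod, setLIntegral_prod _ (by
    refine Measurable.aemeasurable ?_
    exact (ENNReal.measurable_ofReal.comp measurable_fst).mul (hFm.comp hcont))]
  calc _ = ∫⁻ s in Set.Ioo (r/2) r, ENNReal.ofReal (r / 2) *
            (ENNReal.ofReal (2 * Real.pi) * ‖g z‖ₑ) := by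
        rw [setLIntegral_const, Real.volume_Ioo, mul_comm]
        congr 2; ring
    _ ≤ ∫⁻ s in Set.Ioo (r/2) r, ∫⁻ θ in Set.Ioo (-Real.pi) Real.pi,
          ENNReal.ofReal s * F (circleMap z s θ) := by
        refine setLIntegral_mono' measurableSet_Ioo fun s hs => ?_
        have hs0 : 0 < s := by linarith [hs.1]
        rw [lintegral_const_mul' _ _ ENNReal.ofReal_ne_top]
        gcongr
        · exact hs.1.le
        · refine (anq_circle g z s hs0 ?_).trans (le_of_eq ?_)
          · refine (hg.mono ?_).diffContOnCl_ball (U := Metric.ball z r) ?_ |> fun h => h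
            · exact subset_rfl
            · exact Metric.closedBall_subset_ball hs.2
          · refine lintegral_congr fun θ => ?_
            have : circleMap z s θ ∈ Metric.ball z r := by
              simp [circleMap, abs_of_pos hs0, hs.2]
            simp [F, this]
    _ ≤ _ := lintegral_mono_set (fun s hs => by
        have : r / 2 < s := hs.1
        show 0 < s
        linarith)

lemma anq_point (Ω : Set ℂ) (h : ℂ → ℂ) (hd : DifferentiableOn ℂ h Ω)
    (hi : IntegrableOn (fun z => ‖h z‖ ^ 2) Ω volume) (z : ℂ) (r : ℝ) (hr : 0 < r)
    (hz : Metric.ball z r ⊆ Ω) :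
    ‖h z‖ ≤ r⁻¹ * Real.sqrt (∫ w in Ω, ‖h w‖ ^ 2) := by
  have h1 := anq_area (fun w => h w ^ 2) z r hr ((hd.mono hz).pow 2)
  have h2 := h1.trans (lintegral_mono_set hz)
  have h3 : ∫⁻ w in Ω, ‖h w ^ 2‖ₑ = ENNReal.ofReal (∫ w in Ω, ‖h w‖ ^ 2) := by
    rw [ofReal_integral_eq_lintegral_ofReal hi (Filter.Eventually.of_forall fun w => by positivity)]
    refine lintegral_congr fun w => ?_
    rw [← ofReal_norm_eq_enorm, norm_pow]
  have hI : 0 ≤ ∫ w in Ω, ‖h w‖ ^ 2 := integral_nonneg fun w => by positivity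
  rw [h3, ← ofReal_norm_eq_enorm, ← ENNReal.ofReal_mul (by positivity),
    ← ENNReal.ofReal_mul (by positivity), ← ENNReal.ofReal_mul (by positivity),
    ENNReal.ofReal_le_ofReal_iff hI, norm_pow] at h2
  rw [inv_mul_eq_div, le_div_iff₀ hr]
  apply Real.le_sqrt_of_sq_le
  have hp := Real.pi_gt_three
  nlinarith [sq_nonneg (‖h z‖ * r)]

lemma anq_diff (Ω : Set ℂ) (hΩ : IsOpen Ω) (h : ℂ → ℂ) (hd : DifferentiableOn ℂ h Ω) (k : ℕ) :
    DifferentiableOn ℂ (iteratedDeriv k h) Ω := by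
  induction k with
  | zero => simpa using hd
  | succ k ih => rw [iteratedDeriv_succ]; exact ih.deriv hΩ

lemma anq_iter (h : ℂ → ℂ) (n k : ℕ) :
    iteratedDeriv n (iteratedDeriv k h) = iteratedDeriv (n + k) h := by
  simp only [iteratedDeriv_eq_iterate, Function.iterate_add_apply]

lemma anq_deriv (Ω : Set ℂ) (h : ℂ → ℂ) (hd : DifferentiableOn ℂ h Ω)
    (hi : IntegrableOn (fun z => ‖h z‖ ^ 2) Ω volume) (z : ℂ) (R : ℝ) (hR : 0 < R)
    (hz : Metric.closedBall z (2 * R) ⊆ Ω) (k : ℕ) :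
    ‖iteratedDeriv k h z‖ ≤ k.factorial * R⁻¹ / R ^ k * Real.sqrt (∫ w in Ω, ‖h w‖ ^ 2) := by
  refine (Complex.norm_iteratedDeriv_le_of_forall_mem_sphere_norm_le (R := R) 
    (C := R⁻¹ * Real.sqrt (∫ w in Ω, ‖h w‖ ^ 2)) k hR ?_ ?_).trans (le_of_eq ?_)
  · exact hd.diffContOnCl_ball ((Metric.closedBall_subset_closedBall (by linarith)).trans hz)
  · intro w hw
    refine anq_point Ω h hd hi w R hR (subset_trans (fun y hy => ?_) hz)
    rw [Metric.mem_sphere] at hw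
    rw [Metric.mem_ball] at hy
    rw [Metric.mem_closedBall]
    linarith [dist_triangle y w z]
  · ring

lemma anq_taylor (Ω : Set ℂ) (hΩ : IsOpen Ω) (h : ℂ → ℂ) (hd : DifferentiableOn ℂ h Ω)
    (hi : IntegrableOn (fun z => ‖h z‖ ^ 2) Ω volume) (x y : ℂ) (R : ℝ) (hR : 0 < R)
    (hx : Metric.closedBall x (3 * R) ⊆ Ω) (hy : dist y x ≤ R / 2) (k N : ℕ) :
    ‖iteratedDeriv k h y - ∑ n ∈ range N,
        ((n.factorial : ℂ)⁻¹ * (y - x) ^ n) * iteratedDeriv (n + k) h x‖ ≤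
      (k.factorial * R⁻¹ / R ^ k * Real.sqrt (∫ w in Ω, ‖h w‖ ^ 2)) * (1 / 2) ^ N / (1 - 1 / 2) := by
  set M := k.factorial * R⁻¹ / R ^ k * Real.sqrt (∫ w in Ω, ‖h w‖ ^ 2) with hM
  have hdk := anq_diff Ω hΩ h hd k
  have hcb : Metric.closedBall x R ⊆ Ω :=
    (Metric.closedBall_subset_closedBall (by linarith)).trans hx
  have hs : HasSum (fun n : ℕ => ((n.factorial : ℂ)⁻¹ * (y - x) ^ n) * iteratedDeriv (n + k) h x)
      (iteratedDeriv k h y) := by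
    have := Complex.hasSum_taylorSeries_on_ball (f := iteratedDeriv k h) (c := x) (r := R) (z := y)
      (hdk.mono (Metric.ball_subset_closedBall.trans hcb)) (by rw [Metric.mem_ball]; linarith)
    simpa only [anq_iter, smul_eq_mul, mul_assoc] using this
  rw [norm_sub_rev]
  refine norm_sub_le_of_geometric_bound_of_hasSum (by norm_num) (fun n => ?_) hs N
  have hb : ‖iteratedDeriv n (iteratedDeriv k h) x‖ ≤ n.factorial * M / R ^ n := by
    refine Complex.norm_iteratedDeriv_le_of_forall_mem_sphere_norm_le n hR
      (hdk.diffContOnCl_ball hcb) fun w hw => ?_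
    refine anq_deriv Ω h hd hi w R hR (subset_trans (fun v hv => ?_) hx) k
    rw [Metric.mem_sphere] at hw
    rw [Metric.mem_closedBall] at hv ⊢
    linarith [dist_triangle v w x]
  rw [anq_iter] at hb
  have hyx : ‖y - x‖ ≤ R / 2 := by rwa [← dist_eq_norm]
  have hM0 : 0 ≤ M := by positivity
  rw [norm_mul, norm_mul, norm_inv, norm_pow, Complex.norm_natCast]
  calc _ ≤ (n.factorial : ℝ)⁻¹ * (R / 2) ^ n * (n.factorial * M / R ^ n) := by gcongr
    _ = M * (1 / 2) ^ n := by
      have : (n.factorial : ℝ) ≠ 0 := by positivity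
      rw [div_pow, div_pow]
      field_simp
      simp

/-- `L` is approximable by finite combinations of derivative evaluations at `a`. -/
def AnqApprox (Ω : Set ℂ) (a : ℂ) (L : (ℂ → ℂ) → ℂ) : Prop :=
  ∀ ε : ℝ, 0 < ε → ∃ T ∈ Submodule.span ℂ (Set.range fun m : ℕ => fun h : ℂ → ℂ => iteratedDeriv m h a),
    ∀ h : ℂ → ℂ, DifferentiableOn ℂ h Ω → IntegrableOn (fun z => ‖h z‖ ^ 2) Ω volume →
      ‖L h - T h‖ ≤ ε * Real.sqrt (∫ z in Ω, ‖h z‖ ^ 2)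

lemma AnqApprox.zero (Ω : Set ℂ) (a : ℂ) : AnqApprox Ω a (fun _ => 0) := by
  intro ε hε
  exact ⟨0, Submodule.zero_mem _, fun h _ _ => by simp; positivity⟩

lemma AnqApprox.add {Ω : Set ℂ} {a : ℂ} {L L' : (ℂ → ℂ) → ℂ} (h1 : AnqApprox Ω a L)
    (h2 : AnqApprox Ω a L') : AnqApprox Ω a (fun h => L h + L' h) := by
  intro ε hε
  obtain ⟨T, hT, hT'⟩ := h1 (ε / 2) (by positivity)
  obtain ⟨U, hU, hU'⟩ := h2 (ε / 2) (by positivity)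
  refine ⟨T + U, Submodule.add_mem _ hT hU, fun h hd hi => ?_⟩
  have e : L h + L' h - (T + U) h = (L h - T h) + (L' h - U h) := by
    simp only [Pi.add_apply]; ring
  rw [e]
  refine (norm_add_le _ _).trans ?_
  linarith [hT' h hd hi, hU' h hd hi]

lemma AnqApprox.smul {Ω : Set ℂ} {a : ℂ} {L : (ℂ → ℂ) → ℂ} (c : ℂ) (h1 : AnqApprox Ω a L) :
    AnqApprox Ω a (fun h => c * L h) := by
  intro ε hε
  obtain ⟨T, hT, hT'⟩ := h1 (ε / (‖c‖ + 1)) (by positivity)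
  refine ⟨c • T, Submodule.smul_mem _ c hT, fun h hd hi => ?_⟩
  have e : c * L h - (c • T) h = c * (L h - T h) := by
    simp only [Pi.smul_apply, smul_eq_mul]; ring
  rw [e, norm_mul]
  calc ‖c‖ * ‖L h - T h‖ ≤ (‖c‖ + 1) * (ε / (‖c‖ + 1) * Real.sqrt (∫ z in Ω, ‖h z‖ ^ 2)) := by
        gcongr
        · linarith
        · exact hT' h hd hi
    _ = _ := by field_simp

lemma AnqApprox.sum {Ω : Set ℂ} {a : ℂ} {L : ℕ → (ℂ → ℂ) → ℂ} (h1 : ∀ n, AnqApprox Ω a (L n))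
    (N : ℕ) : AnqApprox Ω a (fun h => ∑ n ∈ range N, L n h) := by
  induction N with
  | zero => simpa using AnqApprox.zero Ω a
  | succ N ih =>
    simp only [sum_range_succ]
    exact ih.add (h1 N)

lemma AnqApprox.lim {Ω : Set ℂ} {a : ℂ} {L : (ℂ → ℂ) → ℂ}
    (H : ∀ ε : ℝ, 0 < ε → ∃ T, AnqApprox Ω a T ∧
      ∀ h : ℂ → ℂ, DifferentiableOn ℂ h Ω → IntegrableOn (fun z => ‖h z‖ ^ 2) Ω volume →
      ‖L h - T h‖ ≤ ε * Real.sqrt (∫ z in Ω, ‖h z‖ ^ 2)) : AnqApprox Ω a L := by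
  intro ε hε
  obtain ⟨T, hT, hT'⟩ := H (ε / 2) (by positivity)
  obtain ⟨U, hU, hU'⟩ := hT (ε / 2) (by positivity)
  refine ⟨U, hU, fun h hd hi => ?_⟩
  have e : L h - U h = (L h - T h) + (T h - U h) := by ring
  rw [e]
  refine (norm_add_le _ _).trans ?_
  linarith [hT' h hd hi, hU' h hd hi]

lemma anq_step (Ω : Set ℂ) (hΩ : IsOpen Ω) (a x y : ℂ) (R : ℝ) (hR : 0 < R)
    (hx : Metric.closedBall x (3 * R) ⊆ Ω) (hy : dist y x ≤ R / 2)
    (H : ∀ k, AnqApprox Ω a (fun h => iteratedDeriv k h x)) (k : ℕ) :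
    AnqApprox Ω a (fun h => iteratedDeriv k h y) := by
  apply AnqApprox.lim
  intro ε hε
  set K : ℝ := k.factorial * R⁻¹ / R ^ k with hK
  have hK0 : 0 < K := by positivity
  obtain ⟨N, hN⟩ := exists_pow_lt_of_lt_one (show 0 < ε / (2 * K) by positivity)
    (show (1 / 2 : ℝ) < 1 by norm_num)
  refine ⟨_, AnqApprox.sum (L := fun n h => ((n.factorial : ℂ)⁻¹ * (y - x) ^ n) *
    iteratedDeriv (n + k) h x) (fun n => (H (n + k)).smul _) N, fun h hd hi => ?_⟩
  refine (anq_taylor Ω hΩ h hd hi x y R hR hx hy k N).trans ?_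
  rw [← hK]
  have h1 : K * (1 / 2) ^ N * 2 ≤ ε := by
    rw [lt_div_iff₀ (by positivity)] at hN
    linarith
  calc _ = (K * (1 / 2) ^ N * 2) * Real.sqrt (∫ w in Ω, ‖h w‖ ^ 2) := by ring
    _ ≤ _ := by gcongr

lemma anq_all (Ω : Set ℂ) (hΩ : IsOpen Ω) (hc : IsConnected Ω) (a b : ℂ) (ha : a ∈ Ω)
    (hb : b ∈ Ω) : AnqApprox Ω a (fun h => h b) := by
  have key := hc.isPreconnected.induction₂'
    (fun x y => (∀ k, AnqApprox Ω a (fun h => iteratedDeriv k h x)) →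
      (∀ k, AnqApprox Ω a (fun h => iteratedDeriv k h y))) ?_
    (fun x y z _ _ _ h1 h2 h => h2 (h1 h)) ha hb
  · have := key (fun k ε hε => ⟨fun h => iteratedDeriv k h a, Submodule.subset_span ⟨k, rfl⟩,
      fun h _ _ => by simp; positivity⟩) 0
    simpa using this
  · intro x hx
    obtain ⟨ρ, hρ, hρΩ⟩ := Metric.isOpen_iff.1 hΩ x hx
    refine mem_nhdsWithin_of_mem_nhds ?_
    filter_upwards [Metric.ball_mem_nhds x (show 0 < ρ / 10 by positivity)] with y hy
    rw [Metric.mem_ball] at hy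
    constructor
    · refine fun H k => anq_step Ω hΩ a x y (ρ / 5) (by positivity) ?_ (by linarith) H k
      exact (Metric.closedBall_subset_ball (by linarith)).trans hρΩ
    · refine fun H k => anq_step Ω hΩ a y x (ρ / 5) (by positivity) ?_
        (by rw [dist_comm]; linarith) H k
      refine subset_trans (fun v hv => ?_) hρΩ
      rw [Metric.mem_closedBall] at hv
      rw [Metric.mem_ball]
      linarith [dist_triangle v y x]

/-- Approximate null quadrature identity: on a bounded domain `Ω ⊆ ℂ` with
`a, b ∈ Ω`, for every `ε > 0` there are `N` and complex constants `c_0, …, c_N`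
such that every square-integrable holomorphic `h` on `Ω` satisfies
`|h(b) − Σ_{m=0}^N conj(c_m) h^{(m)}(a)| ≤ ε ‖h‖_{L²(Ω)}`. -/
theorem approximate_null_quadrature
    (Ω : Set ℂ) (hΩopen : IsOpen Ω) (hΩconn : IsConnected Ω)
    (hΩbdd : Bornology.IsBounded Ω)
    (a b : ℂ) (ha : a ∈ Ω) (hb : b ∈ Ω)
    (ε : ℝ) (hε : 0 < ε) :
    ∃ N : ℕ, 0 < N ∧ ∃ c : ℕ → ℂ,
      ∀ h : ℂ → ℂ, DifferentiableOn ℂ h Ω →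
        IntegrableOn (fun z => ‖h z‖ ^ 2) Ω volume →
        ‖h b - ∑ m ∈ Finset.range (N + 1),
            (starRingEnd ℂ) (c m) * iteratedDeriv m h a‖
          ≤ ε * Real.sqrt (∫ z in Ω, ‖h z‖ ^ 2) := by
  obtain ⟨T, hT, hT'⟩ := anq_all Ω hΩopen hΩconn a b ha hb ε hε
  rw [Finsupp.mem_span_range_iff_exists_finsupp] at hT
  obtain ⟨p, rfl⟩ := hT
  refine ⟨p.support.sup id + 1, Nat.succ_pos _, fun m => (starRingEnd ℂ) (p m),
    fun h hd hi => ?_⟩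
  convert hT' h hd hi using 3
  rw [Finsupp.sum, Finset.sum_apply]
  symm
  refine (Finset.sum_subset ?_ ?_).trans (Finset.sum_congr rfl fun m _ => ?_)
  · intro m hm
    have : m ≤ p.support.sup id := Finset.le_sup (f := id) hm
    rw [Finset.mem_range]; omega
  · intro m _ hm
    simp [Finsupp.notMem_support_iff.1 hm]
  · simp
end
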